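/- Fix an infinite alphabet Σ and a distinguished letter # ∈ Σ. Let L_diff be the set of words over Σ all of whose letters are pairwise distinct, and let L_⊇ = { ψ#ω : ψ, ω ∈ L_diff, [ω] ⊆ [ψ], and # ∉ [ψ] ∪ [ω] }, where [σ] denotes the set of letters occurring in the word σ. Then there is no one-register alternating finite-memory automaton A over Σ with L(A) = L_⊇. -/

import Mathlib

/-- A one-register alternating finite-memory automaton over the alphabet `Sigma`,
with states `S`. -/
structure AFMA (Sigma : Type) (S : Type) where
  s0 : S
  F : Set S
  Δ : Finset Sigma
  θ0 : Sigma
  θ0_notin : θ0 ∉ Δ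
  μΔ : S → Sigma → Set (Set S)
  μeq : S → Set (Set S)
  μne : S → Set (Set S × Set S)

namespace AFMA

variable {Sigma S : Type}

open Classical

/-- The induced transition function `μ^c` on a configuration `c` and a letter `σ`:
a set of sets of configurations. -/
noncomputable def muC (A : AFMA Sigma S) (c : S × Sigma) (σ : Sigma) : Set (Set (S × Sigma)) :=
  if σ ∈ A.Δ then {D | ∃ Q ∈ A.μΔ c.1 σ, D = Q ×ˢ ({c.2} : Set Sigma)}
  else if σ = c.2 then {D | ∃ Q ∈ A.μeq c.1, D = Q ×ˢ ({c.2} : Set Sigma)}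
  else {D | ∃ p ∈ A.μne c.1, D = p.1 ×ˢ ({c.2} : Set Sigma) ∪ p.2 ×ˢ ({σ} : Set Sigma)}

/-- `SetStep A C σ C'` : `C' ∈ μ^c(C, σ)`, i.e. `C'` is a union, over all `c ∈ C`,
of chosen elements of `μ^c(c, σ)`. -/
def SetStep (A : AFMA Sigma S) (C : Set (S × Sigma)) (σ : Sigma)
    (C' : Set (S × Sigma)) : Prop :=
  ∃ g : S × Sigma → Set (S × Sigma),
    (∀ c ∈ C, g c ∈ A.muC c σ) ∧ C' = ⋃ c ∈ C, g c

/-- `Steps A C w C'` : reading the word `w` from the configuration set `C`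
the automaton can reach the configuration set `C'`. -/
inductive Steps (A : AFMA Sigma S) :
    Set (S × Sigma) → List Sigma → Set (S × Sigma) → Prop
  | nil (C) : Steps A C [] C
  | cons {C C' C'' σ w} : A.SetStep C σ C' → Steps A C' w C'' → Steps A C (σ :: w) C''

/-- A set of configurations is accepting if all its states are accepting. -/
def Accepting (A : AFMA Sigma S) (C : Set (S × Sigma)) : Prop :=
  ∀ c ∈ C, c.1 ∈ A.F

/-- The language accepted by `A`. -/
def Lang (A : AFMA Sigma S) : Set (List Sigma) :=
  {w | ∃ C, A.Steps {(A.s0, A.θ0)} w C ∧ A.Accepting C}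

/-- The action of a permutation of the alphabet on a set of configurations. -/
def mapConfigs (α : Equiv.Perm Sigma) (C : Set (S × Sigma)) : Set (S × Sigma) :=
  (fun c => (c.1, α c.2)) '' C

end AFMA

/-- A `Δ`-permutation of the alphabet: a bijection fixing every distinguished letter. -/
def IsDeltaPerm {Sigma : Type} (Δ : Finset Sigma) (α : Equiv.Perm Sigma) : Prop :=
  ∀ δ ∈ Δ, α δ = δ

namespace AFMA

variable {Sigma S : Type}

/-- The configuration set `C` accepts the word `w`. -/
def Acc (A : AFMA Sigma S) (C : Set (S × Sigma)) (w : List Sigma) : Prop :=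
  ∃ C', A.Steps C w C' ∧ A.Accepting C'

theorem acc_mono (A : AFMA Sigma S) (w : List Sigma) :
    ∀ C D : Set (S × Sigma), D ⊆ C → A.Acc C w → A.Acc D w := by
  induction w with
  | nil =>
    rintro C D h ⟨C', hs, ha⟩
    cases hs
    exact ⟨D, .nil D, fun c hc => ha c (h hc)⟩
  | cons σ w ih =>
    rintro C D h ⟨C', hs, ha⟩
    cases hs with
    | cons h1 h2 =>
      obtain ⟨g, hg, rfl⟩ := h1
      obtain ⟨E, hE, hEa⟩ := ih _ (⋃ c ∈ D, g c) (Set.biUnion_subset_biUnion_left h) ⟨_, h2, ha⟩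
      exact ⟨E, .cons ⟨g, fun c hc => hg c (h hc), rfl⟩ hE, hEa⟩

theorem steps_append (A : AFMA Sigma S) (u v : List Sigma) :
    ∀ C D : Set (S × Sigma), A.Steps C (u ++ v) D ↔ ∃ E, A.Steps C u E ∧ A.Steps E v D := by
  induction u with
  | nil =>
    intro C D
    constructor
    · intro h
      exact ⟨C, .nil C, h⟩
    · rintro ⟨E, h1, h2⟩
      cases h1
      exact h2
  | cons σ u ih =>
    intro C D
    constructor
    · intro h
      cases h with
      | cons h1 h2 =>
        obtain ⟨E, h3, h4⟩ := (ih _ _).1 h2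
        exact ⟨E, .cons h1 h3, h4⟩
    · rintro ⟨E, h1, h2⟩
      cases h1 with
      | cons h3 h4 => exact .cons h3 ((ih _ _).2 ⟨E, h4, h2⟩)

theorem mapConfigs_prod (α : Equiv.Perm Sigma) (Q : Set S) (θ : Sigma) :
    mapConfigs α (Q ×ˢ ({θ} : Set Sigma)) = Q ×ˢ ({α θ} : Set Sigma) := by
  ext ⟨s, x⟩
  simp only [mapConfigs, Set.mem_image, Set.mem_prod, Set.mem_singleton_iff, Prod.exists,
    Prod.mk.injEq]
  constructor
  · rintro ⟨a, b, ⟨h1, rfl⟩, rfl, rfl⟩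
    exact ⟨h1, rfl⟩
  · rintro ⟨h1, rfl⟩
    exact ⟨s, θ, ⟨h1, rfl⟩, rfl, rfl⟩

theorem muC_map (A : AFMA Sigma S) (α : Equiv.Perm Sigma) (hα : IsDeltaPerm A.Δ α)
    (c : S × Sigma) (σ : Sigma) (D : Set (S × Sigma)) (hD : D ∈ A.muC c σ) :
    mapConfigs α D ∈ A.muC (c.1, α c.2) (α σ) := by
  have hmem : α σ ∈ A.Δ ↔ σ ∈ A.Δ := by
    constructor
    · intro h
      have h2 := hα _ h
      rw [α.injective h2] at h
      exact h
    · intro h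
      rw [hα _ h]
      exact h
  unfold muC at hD ⊢
  by_cases h1 : σ ∈ A.Δ
  · have h1' := hmem.2 h1
    rw [if_pos h1] at hD
    rw [if_pos h1']
    obtain ⟨Q, hQ, rfl⟩ := hD
    refine ⟨Q, ?_, mapConfigs_prod _ _ _⟩
    rw [hα _ h1]
    exact hQ
  · have h1' := fun h => h1 (hmem.1 h)
    rw [if_neg h1] at hD
    rw [if_neg h1']
    by_cases h2 : σ = c.2
    · rw [if_pos h2] at hD
      rw [if_pos (congrArg α h2)]
      obtain ⟨Q, hQ, rfl⟩ := hD
      exact ⟨Q, hQ, mapConfigs_prod _ _ _⟩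
    · rw [if_neg h2] at hD
      rw [if_neg (fun h => h2 (α.injective h))]
      obtain ⟨p, hp, rfl⟩ := hD
      refine ⟨p, hp, ?_⟩
      rw [← mapConfigs_prod, ← mapConfigs_prod]
      exact Set.image_union _ _ _

theorem setStep_map (A : AFMA Sigma S) (α : Equiv.Perm Sigma) (hα : IsDeltaPerm A.Δ α)
    (C D : Set (S × Sigma)) (σ : Sigma) (h : A.SetStep C σ D) :
    A.SetStep (mapConfigs α C) (α σ) (mapConfigs α D) := by
  obtain ⟨g, hg, rfl⟩ := h
  refine ⟨fun c => mapConfigs α (g (c.1, α.symm c.2)), ?_, ?_⟩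
  · rintro _ ⟨c, hc, rfl⟩
    have := muC_map A α hα c σ _ (hg c hc)
    simpa using this
  · unfold mapConfigs
    rw [Set.biUnion_image, Set.image_iUnion₂]
    simp

theorem steps_map (A : AFMA Sigma S) (α : Equiv.Perm Sigma) (hα : IsDeltaPerm A.Δ α)
    (C D : Set (S × Sigma)) (w : List Sigma) (h : A.Steps C w D) :
    A.Steps (mapConfigs α C) (w.map α) (mapConfigs α D) := by
  induction h with
  | nil C => exact .nil _
  | cons h1 _ ih => exact .cons (setStep_map A α hα _ _ _ h1) ih

theorem acc_map (A : AFMA Sigma S) (α : Equiv.Perm Sigma) (hα : IsDeltaPerm A.Δ α)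
    (C : Set (S × Sigma)) (w : List Sigma) (h : A.Acc C w) :
    A.Acc (mapConfigs α C) (w.map α) := by
  obtain ⟨D, hD, ha⟩ := h
  refine ⟨_, steps_map A α hα _ _ _ hD, ?_⟩
  rintro _ ⟨c, hc, rfl⟩
  exact ha c hc

theorem steps_support (A : AFMA Sigma S) (C D : Set (S × Sigma)) (w : List Sigma)
    (h : A.Steps C w D) : ∀ d ∈ D, d.2 ∈ w ∨ ∃ c ∈ C, d.2 = c.2 := by
  induction h with
  | nil C => exact fun d hd => .inr ⟨d, hd, rfl⟩
  | @cons C C' C'' σ w h1 _ ih =>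
    intro d hd
    rcases ih d hd with h | ⟨c, hc, hdc⟩
    · exact .inl (List.mem_cons_of_mem _ h)
    · obtain ⟨g, hg, rfl⟩ := h1
      simp only [Set.mem_iUnion] at hc
      obtain ⟨b, hb, hcb⟩ := hc
      have hgb := hg b hb
      have key : c.2 = b.2 ∨ c.2 = σ := by
        unfold muC at hgb
        split_ifs at hgb
        · obtain ⟨Q, _, hQ⟩ := hgb
          rw [hQ] at hcb
          exact .inl hcb.2
        · obtain ⟨Q, _, hQ⟩ := hgb
          rw [hQ] at hcb
          exact .inl hcb.2
        · obtain ⟨Q, _, hQ⟩ := hgb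
          rw [hQ] at hcb
          rcases hcb with hcb | hcb
          · exact .inl hcb.2
          · exact .inr hcb.2
      rcases key with h | h
      · exact .inr ⟨b, hb, hdc.trans h⟩
      · left
        rw [hdc, h]
        exact List.mem_cons_self

end AFMA

/-- Higman's lemma in the form needed below. -/
theorem afma_higman {K : Type} [Finite K] (col : ℕ → ℕ → K) (col0 : ℕ → K) :
    ∃ t t' : ℕ, t < t' ∧ col0 t = col0 t' ∧ ∃ f : ℕ → ℕ, Function.Injective f ∧
      ∀ i < t, f i < t' ∧ col t i = col t' (f i) := by
  have hfin : (Set.univ : Set (K × K)).PartiallyWellOrderedOn (· = ·) :=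
    Set.finite_univ.partiallyWellOrderedOn
  have hw := Set.PartiallyWellOrderedOn.partiallyWellOrderedOn_sublistForall₂ (· = ·) hfin
  let l : ℕ → List (K × K) := fun n =>
    (List.range (n + 1)).map (fun i => (col (n + 1) i, col0 (n + 1)))
  obtain ⟨m, n, hmn, hsub⟩ := hw.exists_lt (f := l) (fun n => by simp)
  obtain ⟨l', hl', hsub⟩ := List.sublistForall₂_iff.1 hsub
  rw [List.forall₂_eq_eq_eq] at hl'
  subst hl'
  obtain ⟨f, hf⟩ := List.sublist_iff_exists_orderEmbedding_getElem?_eq.1 hsub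
  have key : ∀ i < m + 1, f i < n + 1 ∧ col (m + 1) i = col (n + 1) (f i) ∧
      col0 (m + 1) = col0 (n + 1) := by
    intro i hi
    have h := hf i
    have h1 : (l m)[i]? = some (col (m + 1) i, col0 (m + 1)) := by
      simp [l, hi]
    rw [h1] at h
    have hlt : f i < n + 1 := by
      by_contra hcon
      have h2 : (l n)[f i]? = none := by
        simp only [l, List.getElem?_eq_none_iff, List.length_map, List.length_range]
        omega
      rw [h2] at h
      cases h
    have h2 : (l n)[f i]? = some (col (n + 1) (f i), col0 (n + 1)) := by
      simp [l, hlt]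
    rw [h2] at h
    simp only [Option.some.injEq, Prod.mk.injEq] at h
    exact ⟨hlt, h.1, h.2⟩
  exact ⟨m + 1, n + 1, by omega, (key 0 (by omega)).2.2, f, f.injective,
    fun i hi => ⟨(key i hi).1, (key i hi).2.1⟩⟩

/-- Extension of a finite partial injection to a permutation of the alphabet. -/
theorem afma_extend {Sigma : Type} (a : ℕ → Sigma) (ha : Function.Injective a) (t t' : ℕ)
    (htt : t < t') (f : ℕ → ℕ) (hf : Function.Injective f) (hft : ∀ i < t, f i < t') :
    ∃ α : Equiv.Perm Sigma, (∀ i < t, α (a i) = a (f i)) ∧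
      ∀ x, x ∉ Set.range a → α x = x := by
  classical
  have hinj : Set.InjOn (fun i : Fin t' => f i) {i : Fin t' | (i : ℕ) < t} := by
    intro i _ j _ h
    exact Fin.ext (hf h)
  obtain ⟨g, hg⟩ := Set.MapsTo.exists_equiv_extend_of_card_eq (t := Finset.range t')
    (by simp) (s := {i : Fin t' | (i : ℕ) < t}) (f := fun i : Fin t' => f i)
    (by
      intro i hi
      simpa using hft i hi) hinj
  let e : Finset.range t' ≃ Fin t' :=
    ⟨fun x => ⟨x.1, Finset.mem_range.1 x.2⟩, fun x => ⟨x.1, Finset.mem_range.2 x.2⟩,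
      fun _ => rfl, fun _ => rfl⟩
  let ι : Fin t' ↪ Sigma := ⟨fun i => a i, fun i j h => Fin.ext (ha h)⟩
  refine ⟨Equiv.Perm.viaEmbedding (g.trans e) ι, ?_, ?_⟩
  · intro i hi
    have h := Equiv.Perm.viaEmbedding_apply (g.trans e) ι ⟨i, hi.trans htt⟩
    refine h.trans ?_
    exact congrArg a (hg ⟨i, hi.trans htt⟩ hi)
  · intro x hx
    apply Equiv.Perm.viaEmbedding_apply_of_notMem
    rintro ⟨i, rfl⟩
    exact hx ⟨i, rfl⟩

/-- The language `L_⊇ = { ψ#ω : ψ, ω repetition-free, [ω] ⊆ [ψ], # ∉ [ψ] ∪ [ω] }`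
is not accepted by any one-register alternating finite-memory automaton. -/
theorem afma_not_L_supseteq {Sigma : Type} [Infinite Sigma] (hash : Sigma)
    (S : Type) [Fintype S] (A : AFMA Sigma S) :
    A.Lang ≠ {w | ∃ ψ ω : List Sigma,
      w = ψ ++ hash :: ω ∧ ψ.Nodup ∧ ω.Nodup ∧
      (∀ x ∈ ω, x ∈ ψ) ∧ hash ∉ ψ ∧ hash ∉ ω} := by
  classical
  intro hL
  -- letters avoiding the special ones
  let B : Finset Sigma := insert hash (insert A.θ0 A.Δ)
  have hinf : Infinite {x : Sigma // x ∉ B} :=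
    (Set.Finite.infinite_compl B.finite_toSet).to_subtype
  let em := Infinite.natEmbedding {x : Sigma // x ∉ B}
  let a : ℕ → Sigma := fun n => (em n).1
  have ha : Function.Injective a := fun i j h => em.injective (Subtype.ext h)
  have haB : ∀ x ∈ B, x ∉ Set.range a := by
    rintro x hx ⟨i, rfl⟩
    exact (em i).2 hx
  let w : ℕ → List Sigma := fun n => (List.range n).map a
  have hwn : ∀ n, (w n).Nodup := fun n => List.nodup_range.map ha
  have hwh : ∀ n, hash ∉ w n := by
    intro n h
    obtain ⟨i, -, hi⟩ := List.mem_map.1 h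
    exact haB hash (by simp [B]) ⟨i, hi⟩
  have hacc : ∀ n, ∃ C, A.Steps {(A.s0, A.θ0)} (w n) C ∧ A.Acc C (hash :: w n) := by
    intro n
    have h : w n ++ hash :: w n ∈ A.Lang := by
      rw [hL]
      exact ⟨w n, w n, rfl, hwn n, hwn n, fun x hx => hx, hwh n, hwh n⟩
    obtain ⟨D, hD, hDa⟩ := h
    obtain ⟨C, h1, h2⟩ := (AFMA.steps_append A _ _ _ _).1 hD
    exact ⟨C, h1, D, h2, hDa⟩
  choose C hC1 hC2 using hacc
  obtain ⟨t, t', htt, h0, f, hf, hft⟩ := afma_higman (K := Set S)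
    (fun t i => {s | (s, a i) ∈ C t}) (fun t => {s | (s, A.θ0) ∈ C t})
  obtain ⟨α, hα1, hα2⟩ := afma_extend a ha t t' htt f hf (fun i hi => (hft i hi).1)
  have hαB : ∀ x ∈ B, α x = x := fun x hx => hα2 x (haB x hx)
  have hsymmB : ∀ x ∈ B, α.symm x = x := fun x hx => by
    rw [Equiv.symm_apply_eq, hαB x hx]
  have hsub : C t ⊆ AFMA.mapConfigs α.symm (C t') := by
    rintro ⟨s, x⟩ hx
    refine ⟨(s, α x), ?_, by simp⟩
    rcases AFMA.steps_support A _ _ _ (hC1 t) _ hx with h | ⟨c, hc, h⟩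
    · obtain ⟨i, hi, rfl⟩ := List.mem_map.1 h
      rw [List.mem_range] at hi
      rw [hα1 i hi]
      exact (Set.ext_iff.1 (hft i hi).2 s).1 hx
    · rw [Set.mem_singleton_iff] at hc
      subst hc
      have h' : x = A.θ0 := h
      subst h'
      rw [hαB _ (by simp [B])]
      exact (Set.ext_iff.1 h0 s).1 hx
  have hαΔ : IsDeltaPerm A.Δ α.symm := fun δ hδ => hsymmB δ (by simp [B, hδ])
  have h1 := AFMA.acc_mono A _ _ _ hsub (AFMA.acc_map A α.symm hαΔ _ _ (hC2 t'))
  rw [List.map_cons, hsymmB hash (by simp [B])] at h1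
  obtain ⟨D, hD, hDa⟩ := h1
  have hmem : w t ++ hash :: (w t').map α.symm ∈ A.Lang :=
    ⟨D, (AFMA.steps_append A _ _ _ _).2 ⟨_, hC1 t, hD⟩, hDa⟩
  rw [hL] at hmem
  obtain ⟨ψ, ω, heq, -, hω, hωψ, hψ, -⟩ := hmem
  have hnot : hash ∉ (w t').map α.symm := by
    intro h
    obtain ⟨y, hy, hyh⟩ := List.mem_map.1 h
    rw [Equiv.symm_apply_eq, hαB hash (by simp [B])] at hyh
    exact hwh t' (hyh ▸ hy)
  have hsplit : w t = ψ ∧ (w t').map α.symm = ω := by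
    have := (List.append_cons_inj_of_notMem (hwh t) hnot).1 heq
    exact ⟨this.1, this.2.2⟩
  obtain ⟨rfl, rfl⟩ := hsplit
  have hlen := (hω.subperm hωψ).length_le
  simp [w] at hlen
  omega
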